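/- Let 0 < τ < p < ∞ and 0 < τ < q < ∞, and define the modified maximal operator M_τ f(x) = sup over cubes Q ∋ x of ((1/|Q|)∫_Q |f|^τ)^{1/τ}. Then there is a constant K (depending on p, q, τ, d) such that for any sequence of measurable functions (f_j) on ℝ^d, ‖(Σ_j |M_τ f_j|^q)^{1/q}‖_{L^p} ≤ K ‖(Σ_j |f_j|^q)^{1/q}‖_{L^p}. -/

import Mathlib

open MeasureTheory
open scoped ENNReal

def cubeAt (d : ℕ) (c : Fin d → ℝ) (t : ℝ) : Set (EuclideanSpace ℝ (Fin d)) :=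
  {x | ∀ i, c i ≤ x i ∧ x i ≤ c i + t}

/-- The modified (uncentered, cube-based) maximal operator
`M_τ f(x) = sup_{Q ∋ x} ((1/|Q|)∫_Q |f|^τ)^{1/τ}`. -/
noncomputable def modMaximal (d : ℕ) (τ : ℝ) (f : EuclideanSpace ℝ (Fin d) → ℝ)
    (x : EuclideanSpace ℝ (Fin d)) : ℝ≥0∞ :=
  ⨆ Q : {p : (Fin d → ℝ) × ℝ // 0 < p.2 ∧ x ∈ cubeAt d p.1 p.2},
    ((ENNReal.ofReal ((Q : (Fin d → ℝ) × ℝ).2 ^ d))⁻¹ *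
        ∫⁻ y in cubeAt d (Q : (Fin d → ℝ) × ℝ).1 (Q : (Fin d → ℝ) × ℝ).2,
          ENNReal.ofReal (|f y| ^ τ)) ^ (1 / τ)

open Metric Set Module

section Prelim

/-- The layer-cake formula for a single extended nonnegative number. -/
theorem lintegral_Ioi_indicator_rpow (a : ℝ≥0∞) {s : ℝ} (hs : 0 < s) :
    ∫⁻ t in Ioi (0 : ℝ), {t : ℝ | ENNReal.ofReal t < a}.indicator
      (fun t => ENNReal.ofReal (t ^ (s - 1))) t = ENNReal.ofReal s⁻¹ * a ^ s := by
  have finite_case : ∀ b : ℝ, 0 ≤ b →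
      ∫⁻ t in Ioi (0 : ℝ), {t : ℝ | ENNReal.ofReal t < ENNReal.ofReal b}.indicator
        (fun t => ENNReal.ofReal (t ^ (s - 1))) t
        = ENNReal.ofReal s⁻¹ * ENNReal.ofReal b ^ s := by
    intro b hb
    have key := lintegral_rpow_eq_lintegral_meas_lt_mul (Measure.dirac ()) (f := fun _ => b)
      (Filter.Eventually.of_forall fun _ => hb) aemeasurable_const hs
    rw [lintegral_dirac] at key
    rw [ENNReal.ofReal_rpow_of_nonneg hb hs.le, key, ← mul_assoc,
      ← ENNReal.ofReal_mul (by positivity),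
      inv_mul_cancel₀ hs.ne', ENNReal.ofReal_one, one_mul]
    refine setLIntegral_congr_fun measurableSet_Ioi fun t ht => ?_
    by_cases h : t < b
    · simp [indicator, h, ENNReal.ofReal_lt_ofReal_iff_of_nonneg (le_of_lt ht)]
    · simp [indicator, h, ENNReal.ofReal_lt_ofReal_iff_of_nonneg (le_of_lt ht)]
  rcases eq_or_ne a ∞ with rfl | ha
  · rw [ENNReal.top_rpow_of_pos hs, ENNReal.mul_top (by simpa using hs)]
    refine ENNReal.eq_top_of_forall_nnreal_le fun r => ?_
    calc (r : ℝ≥0∞) = ENNReal.ofReal s⁻¹ * ENNReal.ofReal ((s * r) ^ s⁻¹) ^ s := by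
          rw [ENNReal.ofReal_rpow_of_nonneg (by positivity) hs.le,
            ← ENNReal.ofReal_mul (by positivity),
            Real.rpow_inv_rpow (by positivity) hs.ne', inv_mul_cancel_left₀ hs.ne',
            ENNReal.ofReal_coe_nnreal]
      _ = _ := (finite_case _ (by positivity)).symm
      _ ≤ _ := by
          refine lintegral_mono fun t => ?_
          exact indicator_le_indicator_of_subset (fun u _ => ENNReal.ofReal_lt_top)
            (fun _ => zero_le) t
  · rw [← ENNReal.ofReal_toReal ha]
    exact finite_case _ ENNReal.toReal_nonneg

/-- The layer-cake formula for powers of an extended nonnegative function. -/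
theorem lintegral_Ioi_mul_meas_lt {α : Type*} [MeasurableSpace α] (ν : Measure α) [SFinite ν]
    {g f : α → ℝ≥0∞} (hg : Measurable g) (hf : Measurable f) {s : ℝ} (hs : 0 < s) :
    ∫⁻ t in Ioi (0 : ℝ), ENNReal.ofReal (t ^ (s - 1)) *
        ∫⁻ x in {x | ENNReal.ofReal t < g x}, f x ∂ν
      = ENNReal.ofReal s⁻¹ * ∫⁻ x, f x * g x ^ s ∂ν := by
  have hmeas : MeasurableSet {z : ℝ × α | ENNReal.ofReal z.1 < g z.2} :=
    measurableSet_lt (by fun_prop) (by fun_prop)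
  calc _ = ∫⁻ t in Ioi (0 : ℝ), ∫⁻ x, {z : ℝ × α | ENNReal.ofReal z.1 < g z.2}.indicator
        (fun z => ENNReal.ofReal (z.1 ^ (s - 1)) * f z.2) (t, x) ∂ν := by
        refine lintegral_congr fun t => ?_
        rw [← lintegral_const_mul _ hf, ← lintegral_indicator (measurableSet_lt (by fun_prop) hg)]
        rfl
    _ = ∫⁻ x, ∫⁻ t in Ioi (0 : ℝ), {z : ℝ × α | ENNReal.ofReal z.1 < g z.2}.indicator
        (fun z => ENNReal.ofReal (z.1 ^ (s - 1)) * f z.2) (t, x) ∂volume ∂ν := by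
        refine lintegral_lintegral_swap (Measurable.aemeasurable ?_)
        exact Measurable.indicator (by fun_prop) hmeas
    _ = ∫⁻ x, f x * (ENNReal.ofReal s⁻¹ * g x ^ s) ∂ν := by
        refine lintegral_congr fun x => ?_
        rw [← lintegral_Ioi_indicator_rpow _ hs, ← lintegral_const_mul]
        · refine lintegral_congr fun t => ?_
          by_cases h : ENNReal.ofReal t < g x <;> simp [indicator, h, mul_comm]
        · exact Measurable.indicator (by fun_prop) (measurableSet_lt (by fun_prop) (by fun_prop))
    _ = _ := by
        rw [← lintegral_const_mul _ (by fun_prop)]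
        refine lintegral_congr fun x => ?_
        ring

/-- Jensen's inequality for a weighted countable sum. -/
theorem tsum_mul_rpow_le (a g : ℕ → ℝ≥0∞) {r : ℝ} (hr : 1 < r) :
    (∑' k, a k * g k) ^ r ≤ (∑' k, a k) ^ (r - 1) * ∑' k, a k * g k ^ r := by
  have hr0 : 0 < r := by linarith
  have h := ENNReal.lintegral_mul_norm_pow_le (μ := Measure.count)
    (f := fun k => a k * g k ^ r) (g := a) (measurable_of_countable _).aemeasurable
    (measurable_of_countable _).aemeasurable (p := r⁻¹) (q := 1 - r⁻¹) (by positivity)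
    (sub_nonneg.2 (inv_le_one_of_one_le₀ hr.le)) (by ring)
  have hq : 0 ≤ 1 - r⁻¹ := sub_nonneg.2 (inv_le_one_of_one_le₀ hr.le)
  simp only [lintegral_count] at h
  have e : ∀ k, (a k * g k ^ r) ^ r⁻¹ * a k ^ (1 - r⁻¹) = a k * g k := fun k => by
    rw [ENNReal.mul_rpow_of_nonneg _ _ (by positivity), ENNReal.rpow_rpow_inv hr0.ne',
      mul_right_comm,
      ← ENNReal.rpow_add_of_nonneg _ _ (by positivity) hq]
    simp
  simp only [e] at h
  calc _ ≤ _ := ENNReal.rpow_le_rpow h hr0.le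
    _ = _ := by
      rw [ENNReal.mul_rpow_of_nonneg _ _ hr0.le, ENNReal.rpow_inv_rpow hr0.ne', ← ENNReal.rpow_mul,
        mul_comm]
      congr 2
      field_simp

end Prelim

section Maximal

variable {E : Type*} [PseudoMetricSpace E] [MeasurableSpace E]

/-- The uncentered maximal function over open balls, with respect to the measure `ν`. -/
noncomputable def ballMaximal (ν : Measure E) (f : E → ℝ≥0∞) (x : E) : ℝ≥0∞ :=
  ⨆ (z : E) (r : ℝ) (_ : x ∈ ball z r), ⨍⁻ y in ball z r, f y ∂ν

theorem setLAverage_le_ballMaximal (ν : Measure E) (f : E → ℝ≥0∞) {x z : E} {r : ℝ}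
    (hx : x ∈ ball z r) : ⨍⁻ y in ball z r, f y ∂ν ≤ ballMaximal ν f x :=
  le_iSup₂_of_le z r (le_iSup_of_le hx le_rfl)

theorem ballMaximal_le_iff {ν : Measure E} {f : E → ℝ≥0∞} {x : E} {c : ℝ≥0∞} :
    ballMaximal ν f x ≤ c ↔ ∀ z r, x ∈ ball z r → ⨍⁻ y in ball z r, f y ∂ν ≤ c := by
  simp [ballMaximal]

theorem setOf_lt_ballMaximal (ν : Measure E) (f : E → ℝ≥0∞) (c : ℝ≥0∞) :
    {x | c < ballMaximal ν f x}
      = ⋃ b ∈ {b : E × ℝ | c < ⨍⁻ y in ball b.1 b.2, f y ∂ν}, ball b.1 b.2 := by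
  ext x
  simp only [ballMaximal, lt_iSup_iff, mem_ofPred_eq, mem_iUnion, Prod.exists, exists_prop]
  grind

theorem measurable_ballMaximal [OpensMeasurableSpace E] (ν : Measure E) (f : E → ℝ≥0∞) :
    Measurable (ballMaximal ν f) := by
  refine measurable_of_Ioi fun c => ?_
  have : ballMaximal ν f ⁻¹' Ioi c = {x | c < ballMaximal ν f x} := rfl
  rw [this, setOf_lt_ballMaximal]
  exact (isOpen_biUnion fun _ _ => isOpen_ball).measurableSet

theorem ballMaximal_mono (ν : Measure E) {f g : E → ℝ≥0∞} (h : f ≤ g) (x : E) :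
    ballMaximal ν f x ≤ ballMaximal ν g x := by
  refine ballMaximal_le_iff.2 fun z r hx => le_trans ?_ (setLAverage_le_ballMaximal ν g hx)
  rw [setLAverage_eq, setLAverage_eq]
  gcongr
  exact h _

theorem ballMaximal_congr_ae {ν : Measure E} {f g : E → ℝ≥0∞} (h : f =ᵐ[ν] g) :
    ballMaximal ν f = ballMaximal ν g := by
  ext x
  simp only [ballMaximal]
  refine iSup_congr fun z => iSup_congr fun r => iSup_congr fun _ => ?_
  exact laverage_congr (ae_restrict_of_ae h)

theorem ballMaximal_const_mul {ν : Measure E} {f : E → ℝ≥0∞} (hf : Measurable f) (c : ℝ≥0∞)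
    (x : E) : ballMaximal ν (fun y => c * f y) x ≤ c * ballMaximal ν f x := by
  refine ballMaximal_le_iff.2 fun z r hx => ?_
  rw [setLAverage_eq, lintegral_const_mul _ hf, mul_div_assoc, ← setLAverage_eq]
  gcongr
  exact setLAverage_le_ballMaximal ν f hx

theorem ballMaximal_tsum_le {ν : Measure E} {f : ℕ → E → ℝ≥0∞} (hf : ∀ k, Measurable (f k))
    (x : E) : ballMaximal ν (fun y => ∑' k, f k y) x ≤ ∑' k, ballMaximal ν (f k) x := by
  refine ballMaximal_le_iff.2 fun z r hx => ?_
  rw [setLAverage_eq, lintegral_tsum fun k => (hf k).aemeasurable, div_eq_mul_inv,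
    ← ENNReal.tsum_mul_right]
  refine ENNReal.tsum_le_tsum fun k => ?_
  rw [← div_eq_mul_inv, ← setLAverage_eq]
  exact setLAverage_le_ballMaximal ν _ hx

theorem ballMaximal_const_add_le {ν : Measure E} (f : E → ℝ≥0∞) (c : ℝ≥0∞)
    (x : E) : ballMaximal ν (fun y => c + f y) x ≤ c + ballMaximal ν f x := by
  refine ballMaximal_le_iff.2 fun z r hx => ?_
  rw [setLAverage_eq, lintegral_add_left measurable_const, ENNReal.add_div, setLIntegral_const,
    ← setLAverage_eq]
  exact add_le_add (ENNReal.div_le_of_le_mul le_rfl) (setLAverage_le_ballMaximal ν f hx)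

/-- The weak type `(1, 1)` inequality for the maximal function of a doubling measure. -/
theorem mul_meas_lt_ballMaximal_le [OpensMeasurableSpace E]
    [TopologicalSpace.SeparableSpace E] {ν : Measure E} {D : ℝ≥0∞}
    (hν : ∀ z r, 0 < r → ν (closedBall z (5 * r)) ≤ D * ν (ball z r))
    (f : E → ℝ≥0∞) (c : ℝ≥0∞) :
    c * ν {x | c < ballMaximal ν f x} ≤ D * ∫⁻ x, f x ∂ν := by
  set T : ℕ → Set (E × ℝ) := fun n =>
    {b | (c < ⨍⁻ y in ball b.1 b.2, f y ∂ν) ∧ 0 < b.2 ∧ b.2 ≤ n} with hT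
  have hcover : {x | c < ballMaximal ν f x} = ⋃ n, ⋃ b ∈ T n, ball b.1 b.2 := by
    rw [setOf_lt_ballMaximal]
    ext x
    simp only [mem_iUnion, exists_prop, hT, mem_ofPred_eq]
    constructor
    · rintro ⟨b, hb, hx⟩
      obtain ⟨n, hn⟩ := exists_nat_ge b.2
      exact ⟨n, b, ⟨hb, pos_of_mem_ball hx, hn⟩, hx⟩
    · rintro ⟨n, b, ⟨hb, -⟩, hx⟩
      exact ⟨b, hb, hx⟩
  have hmono : Monotone fun n => ⋃ b ∈ T n, ball b.1 b.2 := fun m n hmn =>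
    biUnion_subset_biUnion_left fun b hb =>
      ⟨hb.1, hb.2.1, hb.2.2.trans (by exact_mod_cast hmn)⟩
  rw [hcover, hmono.measure_iUnion, ENNReal.mul_iSup]
  refine iSup_le fun n => ?_
  obtain ⟨u, huT, hdisj, hu⟩ := Vitali.exists_disjoint_subfamily_covering_enlargement_closedBall
    (T n) Prod.fst Prod.snd n (fun b hb => hb.2.2) 5 (by norm_num)
  have hdisj' : u.PairwiseDisjoint fun b : E × ℝ => ball b.1 b.2 :=
    hdisj.mono fun b => ball_subset_closedBall
  have hcount : u.Countable := hdisj'.countable_of_isOpen (fun _ _ => isOpen_ball)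
    fun b hb => nonempty_ball.2 (huT hb).2.1
  calc c * ν (⋃ b ∈ T n, ball b.1 b.2)
      ≤ c * ν (⋃ b ∈ u, closedBall b.1 (5 * b.2)) := by
        refine mul_le_mul_right (measure_mono ?_) c
        refine iUnion₂_subset fun b hb => ?_
        obtain ⟨b', hb', h⟩ := hu b hb
        exact (ball_subset_closedBall.trans h).trans (subset_biUnion_of_mem (u := fun b : E × ℝ =>
          closedBall b.1 (5 * b.2)) hb')
    _ ≤ c * ∑' b : u, D * ν (ball b.1.1 b.1.2) := by
        gcongr
        refine (measure_biUnion_le ν hcount _).trans (ENNReal.tsum_le_tsum fun b => ?_)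
        exact hν _ _ (huT b.2).2.1
    _ = D * ∑' b : u, c * ν (ball b.1.1 b.1.2) := by
        rw [ENNReal.tsum_mul_left, ENNReal.tsum_mul_left]
        ring
    _ ≤ D * ∑' b : u, ∫⁻ y in ball b.1.1 b.1.2, f y ∂ν := by
        gcongr with b
        refine ENNReal.mul_le_of_le_div ?_
        rw [← setLAverage_eq]
        exact (huT b.2).1.le
    _ = D * ∫⁻ y in ⋃ b ∈ u, ball b.1 b.2, f y ∂ν := by
        rw [lintegral_biUnion hcount (fun _ _ => measurableSet_ball) hdisj']
    _ ≤ D * ∫⁻ y, f y ∂ν := by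
        exact mul_le_mul_right (setLIntegral_le_lintegral _ _) D

/-- The strong type `(s, s)` inequality for the maximal function of a doubling measure. -/
theorem lintegral_ballMaximal_rpow_le [OpensMeasurableSpace E]
    [TopologicalSpace.SeparableSpace E] {ν : Measure E} [SFinite ν] {D : ℝ≥0∞} (hD : D ≠ ∞)
    (hν : ∀ z r, 0 < r → ν (closedBall z (5 * r)) ≤ D * ν (ball z r))
    {f : E → ℝ≥0∞} (hf : Measurable f) {s : ℝ} (hs : 1 < s) :
    ∫⁻ x, ballMaximal ν f x ^ s ∂ν
      ≤ 2 ^ s * ENNReal.ofReal s * (D * ENNReal.ofReal (s - 1)⁻¹) * ∫⁻ x, f x ^ s ∂ν := by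
  have hs0 : 0 < s := by linarith
  have hM := measurable_ballMaximal ν f
  have level : ∀ t ∈ Ioi (0 : ℝ), ENNReal.ofReal (t ^ (s - 1)) *
      ∫⁻ x in {x | ENNReal.ofReal t < ballMaximal ν f x / 2}, 1 ∂ν
        ≤ D * (ENNReal.ofReal (t ^ (s - 1 - 1)) *
          ∫⁻ x in {x | ENNReal.ofReal t < f x}, f x ∂ν) := by
    intro t ht
    have ht : 0 < t := ht
    set c := ENNReal.ofReal t with hc
    set S := {x | c < f x}
    have hS : MeasurableSet S := measurableSet_lt measurable_const hf
    have hsub : {x | c < ballMaximal ν f x / 2} ⊆ {x | c < ballMaximal ν (S.indicator f) x} := by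
      intro x hx
      have h1 : ballMaximal ν f x ≤ c + ballMaximal ν (S.indicator f) x := by
        refine (ballMaximal_mono ν (fun y => ?_) x).trans (ballMaximal_const_add_le _ c x)
        by_cases hy : y ∈ S
        · simp [hy]
        · simpa [hy] using (not_lt.1 hy : f y ≤ c)
      have h2 : c * 2 < ballMaximal ν f x :=
        (ENNReal.lt_div_iff_mul_lt (by simp) (by simp)).1 hx
      rw [mul_two] at h2
      exact (ENNReal.add_lt_add_iff_left ENNReal.ofReal_ne_top).1 (h2.trans_le h1)
    have hpow : ENNReal.ofReal (t ^ (s - 1)) = ENNReal.ofReal (t ^ (s - 1 - 1)) * c := by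
      rw [hc, ← ENNReal.ofReal_mul (by positivity), ← Real.rpow_add_one ht.ne']
      simp
    rw [setLIntegral_one, hpow, mul_assoc, mul_left_comm D]
    refine mul_le_mul_right ?_ _
    refine (mul_le_mul_right (measure_mono (μ := ν) hsub) c).trans ?_
    refine (mul_meas_lt_ballMaximal_le hν _ c).trans_eq ?_
    rw [lintegral_indicator hS]
  calc ∫⁻ x, ballMaximal ν f x ^ s ∂ν
      = 2 ^ s * ∫⁻ x, 1 * (ballMaximal ν f x / 2) ^ s ∂ν := by
        rw [← lintegral_const_mul _ (by fun_prop)]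
        refine lintegral_congr fun x => ?_
        rw [one_mul, ← ENNReal.mul_rpow_of_nonneg _ _ hs0.le,
          ENNReal.mul_div_cancel (by simp) (by simp)]
    _ = 2 ^ s * (ENNReal.ofReal s * (ENNReal.ofReal s⁻¹ *
          ∫⁻ x, 1 * (ballMaximal ν f x / 2) ^ s ∂ν)) := by
        rw [← mul_assoc (ENNReal.ofReal s), ← ENNReal.ofReal_mul hs0.le, mul_inv_cancel₀ hs0.ne',
          ENNReal.ofReal_one, one_mul]
    _ ≤ 2 ^ s * (ENNReal.ofReal s * (D * (ENNReal.ofReal (s - 1)⁻¹ *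
          ∫⁻ x, f x * f x ^ (s - 1) ∂ν))) := by
        rw [← lintegral_Ioi_mul_meas_lt ν (by fun_prop) measurable_const hs0,
          ← lintegral_Ioi_mul_meas_lt ν hf hf (sub_pos.2 hs)]
        gcongr
        refine (setLIntegral_mono' measurableSet_Ioi level).trans_eq ?_
        exact lintegral_const_mul' _ _ hD
    _ = _ := by
        have : ∀ x, f x * f x ^ (s - 1) = f x ^ s := fun x => by
          nth_rw 1 [← ENNReal.rpow_one (f x)]
          rw [← ENNReal.rpow_add_of_nonneg _ _ zero_le_one (by linarith), add_sub_cancel]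
        simp only [this]
        ring

/-- An integrated form of the `A₁` condition. -/
theorem setLAverage_mul_setLIntegral_le {A : ℝ≥0∞} {W F : E → ℝ≥0∞} (hF : Measurable F)
    (hW : Measurable W) (hA : ∀ x, ballMaximal μ W x ≤ A * W x) (z : E) (r : ℝ)
    {S : Set E} (hS : MeasurableSet S) (hsub : S ⊆ ball z r) :
    (⨍⁻ y in ball z r, W y ∂μ) * ∫⁻ y in S, F y ∂μ ≤ A * ∫⁻ y in S, W y * F y ∂μ := by
  rw [← lintegral_const_mul _ hF, ← lintegral_const_mul _ (by fun_prop)]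
  refine setLIntegral_mono' hS fun x hx => ?_
  rw [← mul_assoc]
  gcongr
  exact (setLAverage_le_ballMaximal μ W (hsub hx)).trans (hA x)

end Maximal

section Weights

set_option linter.unusedSectionVars false

variable {E : Type*} [NormedAddCommGroup E] [NormedSpace ℝ E] [FiniteDimensional ℝ E]
  [MeasurableSpace E] [BorelSpace E] {μ : Measure E} [μ.IsAddHaarMeasure]

/-- `W` is a nondegenerate Muckenhoupt `A₁` weight with constant `A`. -/
structure IsA1Weight (μ : Measure E) (A : ℝ≥0∞) (W : E → ℝ≥0∞) : Prop where
  measurable : Measurable W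
  ballMaximal_le : ∀ x, ballMaximal μ W x ≤ A * W x
  ne_zero : ∀ x, W x ≠ 0
  ae_ne_top : ∀ᵐ x ∂μ, W x ≠ ∞

theorem addHaar_closedBall_five_mul_le (z : E) {r : ℝ} (hr : 0 < r) :
    μ (closedBall z (5 * r)) ≤ ENNReal.ofReal (6 ^ finrank ℝ E) * μ (ball z r) := by
  rw [Measure.addHaar_ball_center μ z,
    ← Measure.addHaar_ball_mul_of_pos μ z (by norm_num : (0 : ℝ) < 6)]
  exact measure_mono (closedBall_subset_ball (by linarith))

theorem withDensity_closedBall_five_mul_le {A : ℝ≥0∞} {W : E → ℝ≥0∞}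
    (hW : Measurable W) (hA : ∀ x, ballMaximal μ W x ≤ A * W x) (z : E) {r : ℝ} (hr : 0 < r) :
    μ.withDensity W (closedBall z (5 * r))
      ≤ (ENNReal.ofReal (6 ^ finrank ℝ E) * A) * μ.withDensity W (ball z r) := by
  have hball : μ (ball z (6 * r)) = ENNReal.ofReal (6 ^ finrank ℝ E) * μ (ball z r) := by
    rw [Measure.addHaar_ball_center μ z r,
      ← Measure.addHaar_ball_mul_of_pos μ z (by norm_num : (0 : ℝ) < 6)]
  have h := setLAverage_mul_setLIntegral_le (F := fun _ => 1) measurable_const hW hA z (6 * r)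
    measurableSet_ball (ball_subset_ball (by linarith : r ≤ 6 * r))
  simp only [mul_one, setLIntegral_one] at h
  calc μ.withDensity W (closedBall z (5 * r))
      ≤ μ.withDensity W (ball z (6 * r)) :=
        measure_mono (closedBall_subset_ball (by linarith))
    _ = μ (ball z (6 * r)) * ⨍⁻ y in ball z (6 * r), W y ∂μ := by
        rw [measure_mul_setLAverage _ measure_ball_lt_top.ne,
          withDensity_apply _ measurableSet_ball]
    _ = ENNReal.ofReal (6 ^ finrank ℝ E) * ((⨍⁻ y in ball z (6 * r), W y ∂μ) * μ (ball z r)) := by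
        rw [hball]
        ring
    _ ≤ ENNReal.ofReal (6 ^ finrank ℝ E) * (A * ∫⁻ y in ball z r, W y ∂μ) := by gcongr
    _ = _ := by rw [withDensity_apply _ measurableSet_ball, mul_assoc]

theorem ae_eq_zero_of_ballMaximal_eq_zero {W : E → ℝ≥0∞} (hW : Measurable W)
    {x : E} (hx : ballMaximal μ W x = 0) : W =ᵐ[μ] 0 := by
  rw [← lintegral_eq_zero_iff hW, ← setLIntegral_univ, ← iUnion_ball_nat_succ x]
  refine le_antisymm ((lintegral_iUnion_le _ _).trans_eq ?_) zero_le
  refine ENNReal.tsum_eq_zero.2 fun n => ?_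
  have hn : (0 : ℝ) < n + 1 := by positivity
  have h := setLAverage_le_ballMaximal μ W (mem_ball_self hn : x ∈ ball x (n + 1))
  rw [hx, nonpos_iff_eq_zero] at h
  rw [← measure_mul_setLAverage _ measure_ball_lt_top.ne, h, mul_zero]

variable {A : ℝ≥0∞} {W : E → ℝ≥0∞}

theorem IsA1Weight.withDensity_ball_ne_zero (h : IsA1Weight μ A W) (z : E) {r : ℝ} (hr : 0 < r) :
    μ.withDensity W (ball z r) ≠ 0 := by
  rw [withDensity_apply _ measurableSet_ball, Ne, lintegral_eq_zero_iff h.measurable]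
  intro h0
  have : μ.restrict (ball z r) = 0 := by
    rw [← ae_eq_bot, ← Filter.eventually_false_iff_eq_bot]
    filter_upwards [h0] with x hx using h.ne_zero x hx
  exact (measure_ball_pos μ z hr).ne' (Measure.restrict_eq_zero.1 this)

theorem IsA1Weight.withDensity_ball_ne_top (h : IsA1Weight μ A W) (hA : A ≠ ∞) (z : E) {r : ℝ}
    (hr : 0 < r) : μ.withDensity W (ball z r) ≠ ∞ := by
  obtain ⟨x, hx, hxW⟩ : ∃ x ∈ ball z r, W x ≠ ∞ := by
    by_contra! hcon
    exact (measure_ball_pos μ z hr).ne'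
      (measure_mono_null (fun x hx => by simpa using hcon x hx) (ae_iff.1 h.ae_ne_top))
  rw [withDensity_apply _ measurableSet_ball, ← measure_mul_setLAverage _ measure_ball_lt_top.ne]
  refine ENNReal.mul_ne_top measure_ball_lt_top.ne (ne_top_of_le_ne_top
    (ENNReal.mul_ne_top hA hxW) ((setLAverage_le_ballMaximal μ W hx).trans (h.ballMaximal_le x)))

theorem IsA1Weight.ballMaximal_le_withDensity (h : IsA1Weight μ A W) (hA : A ≠ ∞)
    {F : E → ℝ≥0∞} (hF : Measurable F) (x : E) :
    ballMaximal μ F x ≤ A * ballMaximal (μ.withDensity W) F x := by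
  refine ballMaximal_le_iff.2 fun z r hx => ?_
  have hr := pos_of_mem_ball hx
  refine le_trans ?_ (mul_le_mul_right (setLAverage_le_ballMaximal _ F hx) A)
  have key := setLAverage_mul_setLIntegral_le hF h.measurable h.ballMaximal_le z r
    measurableSet_ball subset_rfl
  rw [setLAverage_eq, setLAverage_eq, ← mul_div_assoc, ENNReal.le_div_iff_mul_le
    (.inl (h.withDensity_ball_ne_zero z hr)) (.inl (h.withDensity_ball_ne_top hA z hr)),
    setLIntegral_withDensity_eq_setLIntegral_mul _ h.measurable hF measurableSet_ball]
  refine le_trans (le_of_eq ?_) key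
  rw [setLAverage_eq, ← withDensity_apply W measurableSet_ball, div_eq_mul_inv, div_eq_mul_inv]
  ring

theorem IsA1Weight.ballMaximal_le_mul_withDensity (h : IsA1Weight μ A W) (hA : A ≠ ∞)
    {F : E → ℝ≥0∞} (hF : Measurable F) (x : E) :
    ballMaximal μ F x ≤ A * W x * ballMaximal (μ.withDensity W) (fun y => F y / W y) x := by
  refine ballMaximal_le_iff.2 fun z r hx => ?_
  have hr := pos_of_mem_ball hx
  have hint : ∫⁻ y in ball z r, F y / W y ∂μ.withDensity W = ∫⁻ y in ball z r, F y ∂μ := by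
    rw [setLIntegral_withDensity_eq_setLIntegral_mul _ h.measurable
      (g := fun y => F y / W y) (hF.div h.measurable) measurableSet_ball]
    refine lintegral_congr_ae (ae_restrict_of_ae ?_)
    filter_upwards [h.ae_ne_top] with y hy
    exact ENNReal.mul_div_cancel (h.ne_zero y) hy
  calc ⨍⁻ y in ball z r, F y ∂μ
      = (⨍⁻ y in ball z r, W y ∂μ) * ⨍⁻ y in ball z r, F y / W y ∂μ.withDensity W := by
        rw [setLAverage_eq, setLAverage_eq, setLAverage_eq, hint,
          ← withDensity_apply W measurableSet_ball, div_eq_mul_inv, div_eq_mul_inv, div_eq_mul_inv,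
          mul_mul_mul_comm, mul_comm _ (∫⁻ y in ball z r, F y ∂μ), mul_mul_mul_comm,
          ENNReal.mul_inv_cancel (h.withDensity_ball_ne_zero z hr)
            (h.withDensity_ball_ne_top hA z hr), mul_one]
    _ ≤ _ := mul_le_mul' ((setLAverage_le_ballMaximal μ W hx).trans (h.ballMaximal_le x))
        (setLAverage_le_ballMaximal _ _ hx)

/-- The maximal function is bounded on `L^s(W)` for an `A₁` weight `W`. -/
theorem exists_lintegral_ballMaximal_rpow_mul_weight_le (μ : Measure E) [μ.IsAddHaarMeasure]
    {A : ℝ≥0∞} (hA : A ≠ ∞) {s : ℝ} (hs : 1 < s) :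
    ∃ C : ℝ≥0∞, C ≠ ∞ ∧ ∀ W, IsA1Weight μ A W → ∀ F : E → ℝ≥0∞, Measurable F →
      ∫⁻ x, W x * ballMaximal μ F x ^ s ∂μ ≤ C * ∫⁻ x, W x * F x ^ s ∂μ := by
  have hs0 : 0 ≤ s := by linarith
  refine ⟨A ^ s * (2 ^ s * ENNReal.ofReal s * ((ENNReal.ofReal (6 ^ finrank ℝ E) * A) *
    ENNReal.ofReal (s - 1)⁻¹)), by finiteness, fun W h F hF => ?_⟩
  have strong := lintegral_ballMaximal_rpow_le (D := ENNReal.ofReal (6 ^ finrank ℝ E) * A)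
    (by finiteness)
    (fun z r hr => withDensity_closedBall_five_mul_le h.measurable h.ballMaximal_le z hr)
    hF hs
  have hM := measurable_ballMaximal (μ.withDensity W) F
  rw [lintegral_withDensity_eq_lintegral_mul _ h.measurable (by fun_prop),
    lintegral_withDensity_eq_lintegral_mul _ h.measurable (by fun_prop)] at strong
  rw [mul_assoc (A ^ s)]
  refine le_trans ?_ (mul_le_mul_right strong _)
  rw [← lintegral_const_mul' _ _ (by finiteness)]
  refine lintegral_mono fun x => ?_
  calc W x * ballMaximal μ F x ^ s
      ≤ W x * (A * ballMaximal (μ.withDensity W) F x) ^ s := by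
        gcongr
        exact h.ballMaximal_le_withDensity hA hF x
    _ = _ := by
        rw [ENNReal.mul_rpow_of_nonneg _ _ hs0, Pi.mul_apply]
        ring

/-- The maximal function is bounded on `L^s(σ^{1-s})` for an `A₁` weight `σ`. -/
theorem exists_lintegral_ballMaximal_rpow_mul_dual_weight_le (μ : Measure E) [μ.IsAddHaarMeasure]
    {A : ℝ≥0∞} (hA : A ≠ ∞) {s : ℝ} (hs : 1 < s) :
    ∃ C : ℝ≥0∞, C ≠ ∞ ∧ ∀ σ, IsA1Weight μ A σ → ∀ F : E → ℝ≥0∞, Measurable F →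
      ∫⁻ x, σ x ^ (1 - s) * ballMaximal μ F x ^ s ∂μ ≤ C * ∫⁻ x, σ x ^ (1 - s) * F x ^ s ∂μ := by
  have hs0 : 0 ≤ s := by linarith
  refine ⟨A ^ s * (2 ^ s * ENNReal.ofReal s * ((ENNReal.ofReal (6 ^ finrank ℝ E) * A) *
    ENNReal.ofReal (s - 1)⁻¹)), by finiteness, fun σ h F hF => ?_⟩
  have hσ := h.measurable
  have strong := lintegral_ballMaximal_rpow_le (D := ENNReal.ofReal (6 ^ finrank ℝ E) * A)
    (by finiteness) (fun z r hr => withDensity_closedBall_five_mul_le hσ h.ballMaximal_le z hr)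
    (hF.div hσ) hs
  have hM := measurable_ballMaximal (μ.withDensity σ) (F / σ)
  rw [lintegral_withDensity_eq_lintegral_mul _ hσ (by fun_prop),
    lintegral_withDensity_eq_lintegral_mul _ hσ (by fun_prop)] at strong
  have hrhs : ∫⁻ x, (σ * fun x => (F / σ) x ^ s) x ∂μ = ∫⁻ x, σ x ^ (1 - s) * F x ^ s ∂μ := by
    refine lintegral_congr_ae ?_
    filter_upwards [h.ae_ne_top] with x hx
    rw [Pi.mul_apply, Pi.div_apply, ENNReal.div_rpow_of_nonneg _ _ hs0,
      ENNReal.rpow_sub _ _ (h.ne_zero x) hx,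
      ENNReal.rpow_one, div_eq_mul_inv, div_eq_mul_inv]
    ring
  rw [hrhs] at strong
  rw [mul_assoc (A ^ s)]
  refine le_trans ?_ (mul_le_mul_right strong _)
  rw [← lintegral_const_mul' _ _ (by finiteness)]
  refine lintegral_mono_ae ?_
  filter_upwards [h.ae_ne_top] with x hx
  calc σ x ^ (1 - s) * ballMaximal μ F x ^ s
      ≤ σ x ^ (1 - s) * (A * σ x * ballMaximal (μ.withDensity σ) (F / σ) x) ^ s := by
        gcongr
        exact h.ballMaximal_le_mul_withDensity hA hF x
    _ = A ^ s * ((σ x ^ (1 - s) * σ x ^ s) * ballMaximal (μ.withDensity σ) (F / σ) x ^ s) := by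
        rw [ENNReal.mul_rpow_of_nonneg _ _ hs0, ENNReal.mul_rpow_of_nonneg _ _ hs0]
        ring
    _ = _ := by
        rw [← ENNReal.rpow_add _ _ (h.ne_zero x) hx, sub_add_cancel, ENNReal.rpow_one, Pi.mul_apply]

/-- Powers of an `A₁` weight with exponent in `(0, 1)` are `A₁` weights. -/
theorem IsA1Weight.rpow (h : IsA1Weight μ A W) {θ : ℝ} (h0 : 0 < θ) (h1 : θ < 1) :
    IsA1Weight μ (A ^ θ) fun x => W x ^ θ where
  measurable := h.measurable.pow_const θ
  ballMaximal_le x := by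
    refine ballMaximal_le_iff.2 fun z r hx => ?_
    have hr := pos_of_mem_ball hx
    have jensen := ENNReal.lintegral_mul_norm_pow_le (μ := μ.restrict (ball z r))
      h.measurable.aemeasurable (g := fun _ => 1) aemeasurable_const h0.le (sub_pos.2 h1).le
      (add_sub_cancel _ _)
    simp only [ENNReal.one_rpow, mul_one, setLIntegral_one] at jensen
    rw [← ENNReal.mul_rpow_of_nonneg _ _ h0.le]
    refine le_trans ?_ (ENNReal.rpow_le_rpow ((setLAverage_le_ballMaximal μ W hx).trans
      (h.ballMaximal_le x)) h0.le)
    rw [setLAverage_eq, setLAverage_eq, ENNReal.div_rpow_of_nonneg _ _ h0.le]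
    refine ENNReal.div_le_of_le_mul (jensen.trans_eq ?_)
    rw [ENNReal.rpow_sub _ _ (measure_ball_pos μ z hr).ne' measure_ball_lt_top.ne,
      ENNReal.rpow_one, div_eq_mul_inv, div_eq_mul_inv]
    ring
  ne_zero x := by simpa [ENNReal.rpow_eq_zero_iff, h0, h0.not_gt] using h.ne_zero x
  ae_ne_top := by
    filter_upwards [h.ae_ne_top] with x hx
    exact ENNReal.rpow_ne_top_of_nonneg h0.le hx

/-- The Rubio de Francia algorithm. -/
theorem exists_weight_majorant (μ : Measure E) [μ.IsAddHaarMeasure] {r : ℝ} (hr : 1 < r) :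
    ∃ A : ℝ≥0∞, A ≠ ∞ ∧ ∀ w : E → ℝ≥0∞, Measurable w → ¬ w =ᵐ[μ] 0 → ∫⁻ x, w x ^ r ∂μ ≠ ∞ →
      ∃ W, IsA1Weight μ A W ∧ w ≤ W ∧ ∫⁻ x, W x ^ r ∂μ ≤ 2 ^ r * ∫⁻ x, w x ^ r ∂μ := by
  have hr0 : 0 < r := by linarith
  set D : ℝ≥0∞ := ENNReal.ofReal (6 ^ finrank ℝ E)
  set C : ℝ≥0∞ := 2 ^ r * ENNReal.ofReal r * (D * ENNReal.ofReal (r - 1)⁻¹) + 1 with hC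
  have hCtop : C ≠ ∞ := by finiteness
  have hC0 : C ≠ 0 := by simp [hC]
  set N : ℝ≥0∞ := C ^ r⁻¹ with hN
  have hNtop : N ≠ ∞ := by finiteness
  have hN0 : N ≠ 0 := by simp [hN, hC0, hCtop]
  have hNr : N ^ r = C := ENNReal.rpow_inv_rpow hr0.ne' C
  have strong : ∀ f : E → ℝ≥0∞, Measurable f →
      ∫⁻ x, ballMaximal μ f x ^ r ∂μ ≤ C * ∫⁻ x, f x ^ r ∂μ := fun f hf =>
    (lintegral_ballMaximal_rpow_le ENNReal.ofReal_ne_top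
      (fun z _ h => addHaar_closedBall_five_mul_le z h) hf hr).trans (by gcongr; exact le_self_add)
  refine ⟨2 * N, by finiteness, fun w hw hw0 hwtop => ?_⟩
  let g : ℕ → E → ℝ≥0∞ := fun k => (fun f x => N⁻¹ * ballMaximal μ f x)^[k] w
  have hg_succ : ∀ k x, N * g (k + 1) x = ballMaximal μ (g k) x := fun k x => by
    simp only [g, Function.iterate_succ_apply']
    rw [ENNReal.mul_inv_cancel_left hN0 hNtop]
  have hg_meas : ∀ k, Measurable (g k) := by
    rintro (_ | k)
    · exact hw
    · simp only [g, Function.iterate_succ_apply']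
      exact (measurable_ballMaximal _ _).const_mul _
  have hg_int : ∀ k, ∫⁻ x, g k x ^ r ∂μ ≤ ∫⁻ x, w x ^ r ∂μ := by
    intro k
    induction k with
    | zero => exact le_rfl
    | succ k ih =>
      have h := strong (g k) (hg_meas k)
      simp only [← hg_succ, ENNReal.mul_rpow_of_nonneg _ _ hr0.le, hNr] at h
      rw [lintegral_const_mul' _ _ hCtop, ENNReal.mul_le_mul_iff_right hC0 hCtop] at h
      exact h.trans ih
  set W : E → ℝ≥0∞ := fun x => ∑' k, 2⁻¹ ^ k * g k x
  have hW_meas : Measurable W := Measurable.tsum fun k => (hg_meas k).const_mul _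
  have hwW : w ≤ W := fun x => by
    simpa [g] using ENNReal.le_tsum (f := fun k => (2⁻¹ : ℝ≥0∞) ^ k * g k x) 0
  have hW_A1 : ∀ x, ballMaximal μ W x ≤ 2 * N * W x := fun x => by
    calc ballMaximal μ W x ≤ ∑' k, ballMaximal μ (fun y => 2⁻¹ ^ k * g k y) x :=
          ballMaximal_tsum_le (fun k => (hg_meas k).const_mul _) x
      _ ≤ ∑' k, 2 * N * (2⁻¹ ^ (k + 1) * g (k + 1) x) := by
          refine ENNReal.tsum_le_tsum fun k => ?_
          refine (ballMaximal_const_mul (hg_meas k) _ x).trans_eq ?_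
          rw [← hg_succ, pow_succ]
          calc _ = (2 * 2⁻¹) * (2⁻¹ ^ k * (N * g (k + 1) x)) := by
                rw [ENNReal.mul_inv_cancel (by simp) (by simp), one_mul]
            _ = _ := by ring
      _ = 2 * N * ∑' k, 2⁻¹ ^ (k + 1) * g (k + 1) x := ENNReal.tsum_mul_left
      _ ≤ 2 * N * W x := by
          gcongr
          exact ENNReal.tsum_comp_le_tsum_of_injective (add_left_injective 1)
            (fun k => (2⁻¹ : ℝ≥0∞) ^ k * g k x)
  have hgeom : ∑' k : ℕ, (2⁻¹ : ℝ≥0∞) ^ k = 2 := by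
    rw [ENNReal.tsum_geometric, ENNReal.one_sub_inv_two, inv_inv]
  have hW_int : ∫⁻ x, W x ^ r ∂μ ≤ 2 ^ r * ∫⁻ x, w x ^ r ∂μ := by
    calc ∫⁻ x, W x ^ r ∂μ
        ≤ ∫⁻ x, 2 ^ (r - 1) * ∑' k, 2⁻¹ ^ k * g k x ^ r ∂μ := by
          refine lintegral_mono fun x => ?_
          simpa only [hgeom] using tsum_mul_rpow_le (fun k => 2⁻¹ ^ k) (fun k => g k x) hr
      _ = 2 ^ (r - 1) * ∑' k, 2⁻¹ ^ k * ∫⁻ x, g k x ^ r ∂μ := by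
          rw [lintegral_const_mul' _ _ (by finiteness),
            lintegral_tsum fun k => (((hg_meas k).pow_const r).const_mul _).aemeasurable]
          congr! 3 with k
          exact lintegral_const_mul _ ((hg_meas k).pow_const r)
      _ ≤ 2 ^ (r - 1) * ∑' k : ℕ, 2⁻¹ ^ k * ∫⁻ x, w x ^ r ∂μ := by
          refine mul_le_mul_right (ENNReal.tsum_le_tsum fun k => mul_le_mul_right (hg_int k) _) _
      _ = 2 ^ r * ∫⁻ x, w x ^ r ∂μ := by
          rw [ENNReal.tsum_mul_right, hgeom, ← mul_assoc]
          congr 1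
          nth_rw 2 [← ENNReal.rpow_one 2]
          rw [← ENNReal.rpow_add _ _ (by simp) (by simp), sub_add_cancel]
  refine ⟨W, ⟨hW_meas, hW_A1, fun x hx => hw0 ?_, ?_⟩, hwW, hW_int⟩
  · have hM : ballMaximal μ W x = 0 := by simpa [hx] using hW_A1 x
    filter_upwards [ae_eq_zero_of_ballMaximal_eq_zero hW_meas hM] with y hy
    exact le_antisymm ((hwW y).trans_eq hy) zero_le
  · have hfin : ∫⁻ x, W x ^ r ∂μ ≠ ∞ := ne_top_of_le_ne_top (by finiteness) hW_int
    filter_upwards [ae_lt_top (hW_meas.pow_const r) hfin] with x hx hx'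
    simp [hx', hr0] at hx

theorem lintegral_mul_tsum_ballMaximal_rpow_le {v : E → ℝ≥0∞} (hv : Measurable v) {C : ℝ≥0∞}
    {s : ℝ} (h : ∀ F : E → ℝ≥0∞, Measurable F →
      ∫⁻ x, v x * ballMaximal μ F x ^ s ∂μ ≤ C * ∫⁻ x, v x * F x ^ s ∂μ)
    {F : ℕ → E → ℝ≥0∞} (hF : ∀ j, Measurable (F j)) :
    ∫⁻ x, v x * ∑' j, ballMaximal μ (F j) x ^ s ∂μ ≤ C * ∫⁻ x, v x * ∑' j, F j x ^ s ∂μ := by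
  have hleft : ∀ j, AEMeasurable (fun x => v x * ballMaximal μ (F j) x ^ s) μ := fun j =>
    (hv.mul ((measurable_ballMaximal μ (F j)).pow_const s)).aemeasurable
  have hright : ∀ j, AEMeasurable (fun x => v x * F j x ^ s) μ := fun j =>
    (hv.mul ((hF j).pow_const s)).aemeasurable
  simp_rw [← ENNReal.tsum_mul_left]
  rw [lintegral_tsum hleft, lintegral_tsum hright, ← ENNReal.tsum_mul_left]
  exact ENNReal.tsum_le_tsum fun j => h _ (hF j)

theorem exists_lintegral_tsum_ballMaximal_le_of_eq (μ : Measure E) [μ.IsAddHaarMeasure]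
    {s : ℝ} (hs : 1 < s) :
    ∃ C : ℝ≥0∞, C ≠ ∞ ∧ ∀ F : ℕ → E → ℝ≥0∞, (∀ j, Measurable (F j)) →
      ∫⁻ x, ∑' j, ballMaximal μ (F j) x ^ s ∂μ ≤ C * ∫⁻ x, ∑' j, F j x ^ s ∂μ := by
  refine ⟨2 ^ s * ENNReal.ofReal s * (ENNReal.ofReal (6 ^ finrank ℝ E) *
    ENNReal.ofReal (s - 1)⁻¹), by finiteness, fun F hF => ?_⟩
  have h := lintegral_mul_tsum_ballMaximal_rpow_le (μ := μ) (v := fun _ => 1) measurable_const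
    (fun F hF => by
      simpa only [one_mul] using lintegral_ballMaximal_rpow_le ENNReal.ofReal_ne_top
        (fun z _ h => addHaar_closedBall_five_mul_le (μ := μ) z h) hF hs) hF
  simpa only [one_mul] using h

theorem exists_lintegral_tsum_ballMaximal_le_of_lt (μ : Measure E) [μ.IsAddHaarMeasure]
    {r s : ℝ} (hr : 1 < r) (hrs : r < s) :
    ∃ C : ℝ≥0∞, C ≠ ∞ ∧ ∀ F : ℕ → E → ℝ≥0∞, (∀ j, Measurable (F j)) →
      ∫⁻ x, (∑' j, ballMaximal μ (F j) x ^ s) ^ (r / s) ∂μ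
        ≤ C * ∫⁻ x, (∑' j, F j x ^ s) ^ (r / s) ∂μ := by
  have hs : 1 < s := hr.trans hrs
  have hs0 : 0 < s := by linarith
  have hr0 : 0 < r := by linarith
  have hρ0 : 0 < r / s := by positivity
  have hρ1 : r / s < 1 := (div_lt_one hs0).2 hrs
  obtain ⟨A, hA, majorant⟩ := exists_weight_majorant μ hr
  set θ := (s - r) / (s - 1) with hθ
  have hθ0 : 0 < θ := div_pos (by linarith) (by linarith)
  have hθ1 : θ < 1 := (div_lt_one (by linarith)).2 (by linarith)
  obtain ⟨C, hC, weighted⟩ := exists_lintegral_ballMaximal_rpow_mul_dual_weight_le μ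
    (A := A ^ θ) (by finiteness) hs
  refine ⟨max 1 (C ^ (r / s) * 2 ^ r), by finiteness, fun F hF => ?_⟩
  set S : E → ℝ≥0∞ := fun x => ∑' j, ballMaximal μ (F j) x ^ s
  set T : E → ℝ≥0∞ := fun x => ∑' j, F j x ^ s
  have hSm : Measurable S := Measurable.tsum fun j => (measurable_ballMaximal μ (F j)).pow_const s
  have hTm : Measurable T := Measurable.tsum fun j => (hF j).pow_const s
  have hTr : ∀ x, (T x ^ s⁻¹) ^ r = T x ^ (r / s) := fun x => by
    rw [← ENNReal.rpow_mul, inv_mul_eq_div]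
  by_cases hTtop : ∫⁻ x, T x ^ (r / s) ∂μ = ∞
  · rw [hTtop, ENNReal.mul_top (by positivity)]
    exact le_top
  by_cases hT0 : (fun x => T x ^ s⁻¹) =ᵐ[μ] 0
  · have hzero : ∀ x, S x = 0 := fun x => by
      refine ENNReal.tsum_eq_zero.2 fun j => ?_
      have hFj : F j =ᵐ[μ] 0 := by
        filter_upwards [hT0] with y hy
        have hy' : T y = 0 := by simpa [hs0, hs0.not_gt] using hy
        simpa [hs0, hs0.not_gt] using ENNReal.tsum_eq_zero.1 hy' j
      have hMj : ballMaximal μ (F j) x = 0 := by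
        rw [ballMaximal_congr_ae hFj]
        refine nonpos_iff_eq_zero.1 (ballMaximal_le_iff.2 fun z r _ => ?_)
        simp
      rw [hMj, ENNReal.zero_rpow_of_pos hs0]
    have hint : ∫⁻ x, S x ^ (r / s) ∂μ = 0 := by simp [hzero, hρ0]
    exact hint.le.trans zero_le
  obtain ⟨W, hW, hGW, hWint⟩ := majorant (fun x => T x ^ s⁻¹) (hTm.pow_const _) hT0
    (by simpa only [hTr] using hTtop)
  simp only [hTr] at hWint
  have hWm := hW.measurable
  have hpow : ∀ x, (W x ^ θ) ^ (1 - s) = W x ^ (r - s) := fun x => by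
    rw [← ENNReal.rpow_mul, hθ]
    congr 1
    have : s - 1 ≠ 0 := by linarith
    field_simp
    ring
  have hsum := lintegral_mul_tsum_ballMaximal_rpow_le ((hWm.pow_const θ).pow_const (1 - s))
    (weighted _ (hW.rpow hθ0 hθ1)) hF
  simp only [hpow] at hsum
  have hTW : ∫⁻ x, W x ^ (r - s) * T x ∂μ ≤ ∫⁻ x, W x ^ r ∂μ := by
    refine lintegral_mono_ae ?_
    filter_upwards [hW.ae_ne_top] with x hx
    calc W x ^ (r - s) * T x ≤ W x ^ (r - s) * W x ^ s := by
          gcongr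
          exact (ENNReal.rpow_inv_le_iff hs0).1 (hGW x)
      _ = W x ^ r := by rw [← ENNReal.rpow_add _ _ (hW.ne_zero x) hx, sub_add_cancel]
  calc ∫⁻ x, S x ^ (r / s) ∂μ
      = ∫⁻ x, (W x ^ (r - s) * S x) ^ (r / s) * (W x ^ r) ^ (1 - r / s) ∂μ := by
        refine lintegral_congr_ae ?_
        filter_upwards [hW.ae_ne_top] with x hx
        rw [ENNReal.mul_rpow_of_nonneg _ _ hρ0.le, mul_right_comm, ← ENNReal.rpow_mul,
          ← ENNReal.rpow_mul, ← ENNReal.rpow_add _ _ (hW.ne_zero x) hx]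
        have : (r - s) * (r / s) + r * (1 - r / s) = 0 := by field_simp; ring
        rw [this, ENNReal.rpow_zero, one_mul]
    _ ≤ (∫⁻ x, W x ^ (r - s) * S x ∂μ) ^ (r / s) * (∫⁻ x, W x ^ r ∂μ) ^ (1 - r / s) :=
        ENNReal.lintegral_mul_norm_pow_le (by fun_prop) (by fun_prop) hρ0.le
          (sub_pos.2 hρ1).le (add_sub_cancel _ _)
    _ ≤ (C * ∫⁻ x, W x ^ r ∂μ) ^ (r / s) * (∫⁻ x, W x ^ r ∂μ) ^ (1 - r / s) := by
        refine mul_le_mul_left (ENNReal.rpow_le_rpow (hsum.trans ?_) hρ0.le) _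
        exact mul_le_mul_right hTW C
    _ = C ^ (r / s) * ∫⁻ x, W x ^ r ∂μ := by
        rw [ENNReal.mul_rpow_of_nonneg _ _ hρ0.le, mul_assoc,
          ← ENNReal.rpow_add_of_nonneg _ _ hρ0.le (sub_pos.2 hρ1).le, add_sub_cancel,
          ENNReal.rpow_one]
    _ ≤ C ^ (r / s) * (2 ^ r * ∫⁻ x, T x ^ (r / s) ∂μ) := by gcongr
    _ ≤ _ := by
        rw [← mul_assoc]
        gcongr
        exact le_max_right _ _

/-- Duality: a function that pairs boundedly with `L^{ρ'}` is bounded in `L^ρ`. -/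
theorem lintegral_rpow_le_of_forall_lintegral_mul_le {ρ : ℝ} (hρ : 1 < ρ) {S : E → ℝ≥0∞}
    (hS : Measurable S) {X : ℝ≥0∞}
    (h : ∀ w : E → ℝ≥0∞, Measurable w → ∫⁻ x, w x ^ (1 - ρ⁻¹)⁻¹ ∂μ ≠ ∞ →
      ∫⁻ x, w x * S x ∂μ ≤ X * (∫⁻ x, w x ^ (1 - ρ⁻¹)⁻¹ ∂μ) ^ (1 - ρ⁻¹)) :
    ∫⁻ x, S x ^ ρ ∂μ ≤ X ^ ρ := by
  have hρ0 : 0 < ρ := by linarith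
  set U : ℕ → E → ℝ≥0∞ := fun n => (ball 0 n).indicator fun x => min (S x) n with hU
  have hUm : ∀ n, Measurable (U n) := fun n =>
    (hS.min measurable_const).indicator measurableSet_ball
  have hUmono : ∀ x, Monotone fun n => U n x := fun x m n hmn => by
    have hmn' : (m : ℝ) ≤ n := by exact_mod_cast hmn
    refine (indicator_le_indicator_of_subset (ball_subset_ball hmn') (fun _ => zero_le) x).trans
      (indicator_le_indicator ?_)
    gcongr
  have hUlim : ∀ x, Filter.Tendsto (fun n => U n x) Filter.atTop (nhds (S x)) := fun x => by
    have hmin : Filter.Tendsto (fun n : ℕ => min (S x) n) Filter.atTop (nhds (min (S x) ∞)) :=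
      tendsto_const_nhds.min ENNReal.tendsto_nat_nhds_top
    rw [min_top_right] at hmin
    refine hmin.congr' ?_
    obtain ⟨N, hN⟩ := exists_nat_gt ‖x‖
    filter_upwards [Filter.eventually_ge_atTop N] with n hn
    have hx : x ∈ ball (0 : E) n := by
      rw [mem_ball_zero_iff]
      exact hN.trans_le (by exact_mod_cast hn)
    simp [hU, hx]
  have hUle : ∀ n x, U n x ≤ S x := fun n x =>
    indicator_apply_le fun _ => min_le_left _ _
  refine le_of_tendsto' (lintegral_tendsto_of_tendsto_of_monotone
    (fun n => ((hUm n).pow_const ρ).aemeasurable)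
    (Filter.Eventually.of_forall fun x m n hmn => ENNReal.rpow_le_rpow (hUmono x hmn) hρ0.le)
    (Filter.Eventually.of_forall fun x =>
      (ENNReal.continuous_rpow_const.tendsto _).comp (hUlim x))) fun n => ?_
  set I := ∫⁻ x, U n x ^ ρ ∂μ with hI
  have hItop : I ≠ ∞ := by
    refine ne_top_of_le_ne_top (b := (n : ℝ≥0∞) ^ ρ * μ (ball 0 n)) ?_ ?_
    · exact ENNReal.mul_ne_top (by finiteness) measure_ball_lt_top.ne
    · rw [← setLIntegral_const, ← lintegral_indicator measurableSet_ball]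
      refine lintegral_mono fun x => ?_
      by_cases hx : x ∈ ball (0 : E) n
      · simp only [hU, indicator_of_mem hx]
        exact ENNReal.rpow_le_rpow (min_le_right _ _) hρ0.le
      · simp [hU, indicator_of_notMem hx, hρ0]
  have hconj : ∀ x, (U n x ^ (ρ - 1)) ^ (1 - ρ⁻¹)⁻¹ = U n x ^ ρ := fun x => by
    rw [← ENNReal.rpow_mul]
    congr 1
    have : ρ - 1 ≠ 0 := by linarith
    field_simp
  have hw := h (fun x => U n x ^ (ρ - 1)) ((hUm n).pow_const _) (by simpa only [hconj] using hItop)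
  simp only [hconj, ← hI] at hw
  have hIle : I ≤ X * I ^ (1 - ρ⁻¹) := by
    refine le_trans (lintegral_mono fun x => ?_) hw
    calc U n x ^ ρ = U n x ^ (ρ - 1) * U n x ^ (1 : ℝ) := by
          rw [← ENNReal.rpow_add_of_nonneg _ _ (by linarith) zero_le_one, sub_add_cancel]
      _ ≤ U n x ^ (ρ - 1) * S x := by
          rw [ENNReal.rpow_one]
          gcongr
          exact hUle n x
  rcases eq_or_ne I 0 with hI0 | hI0
  · rw [hI0]
    exact zero_le
  rw [← ENNReal.rpow_inv_le_iff hρ0]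
  rw [← ENNReal.div_le_iff (by simp [hI0, hItop]) (by finiteness)] at hIle
  refine le_trans (le_of_eq ?_) hIle
  nth_rw 2 [← ENNReal.rpow_one I]
  rw [← ENNReal.rpow_sub _ _ hI0 hItop, sub_sub_cancel]

theorem exists_lintegral_tsum_ballMaximal_le_of_gt (μ : Measure E) [μ.IsAddHaarMeasure]
    {r s : ℝ} (hs : 1 < s) (hsr : s < r) :
    ∃ C : ℝ≥0∞, C ≠ ∞ ∧ ∀ F : ℕ → E → ℝ≥0∞, (∀ j, Measurable (F j)) →
      ∫⁻ x, (∑' j, ballMaximal μ (F j) x ^ s) ^ (r / s) ∂μ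
        ≤ C * ∫⁻ x, (∑' j, F j x ^ s) ^ (r / s) ∂μ := by
  have hs0 : 0 < s := by linarith
  set ρ := r / s
  have hρ : 1 < ρ := (one_lt_div hs0).2 hsr
  have hρ0 : 0 < ρ := by linarith
  set κ := 1 - ρ⁻¹ with hκdef
  have hκ : 0 < κ := sub_pos.2 (inv_lt_one_of_one_lt₀ hρ)
  have hκ1 : κ < 1 := by
    rw [hκdef]
    linarith [inv_pos.2 hρ0]
  obtain ⟨A, hA, majorant⟩ := exists_weight_majorant μ ((one_lt_inv₀ hκ).2 hκ1)
  obtain ⟨C, hC, weighted⟩ := exists_lintegral_ballMaximal_rpow_mul_weight_le μ hA hs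
  refine ⟨(C * 2) ^ ρ, by finiteness, fun F hF => ?_⟩
  set T : E → ℝ≥0∞ := fun x => ∑' j, F j x ^ s
  have hTm : Measurable T := Measurable.tsum fun j => (hF j).pow_const s
  have hSm : Measurable fun x => ∑' j, ballMaximal μ (F j) x ^ s :=
    Measurable.tsum fun j => (measurable_ballMaximal μ (F j)).pow_const s
  have hX : (C * 2) ^ ρ * ∫⁻ x, T x ^ ρ ∂μ = (C * 2 * (∫⁻ x, T x ^ ρ ∂μ) ^ ρ⁻¹) ^ ρ := by
    rw [ENNReal.mul_rpow_of_nonneg (C * 2) ((∫⁻ x, T x ^ ρ ∂μ) ^ ρ⁻¹) hρ0.le,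
      ENNReal.rpow_inv_rpow hρ0.ne']
  rw [hX]
  refine lintegral_rpow_le_of_forall_lintegral_mul_le hρ hSm fun w hw hwtop => ?_
  by_cases hw0 : w =ᵐ[μ] 0
  · refine le_trans (le_of_eq ?_) zero_le
    rw [← lintegral_zero (μ := μ)]
    refine lintegral_congr_ae ?_
    filter_upwards [hw0] with x hx
    simp [hx]
  obtain ⟨W, hW, hwW, hWint⟩ := majorant w hw hw0 hwtop
  have hWm := hW.measurable
  calc ∫⁻ x, w x * ∑' j, ballMaximal μ (F j) x ^ s ∂μ
      ≤ ∫⁻ x, W x * ∑' j, ballMaximal μ (F j) x ^ s ∂μ :=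
        lintegral_mono fun x => mul_le_mul_left (hwW x) _
    _ ≤ C * ∫⁻ x, W x * T x ∂μ :=
        lintegral_mul_tsum_ballMaximal_rpow_le hWm (weighted W hW) hF
    _ = C * ∫⁻ x, (W x ^ κ⁻¹) ^ κ * (T x ^ ρ) ^ ρ⁻¹ ∂μ := by
        simp_rw [ENNReal.rpow_inv_rpow hκ.ne', ENNReal.rpow_rpow_inv hρ0.ne']
    _ ≤ C * ((∫⁻ x, W x ^ κ⁻¹ ∂μ) ^ κ * (∫⁻ x, T x ^ ρ ∂μ) ^ ρ⁻¹) := by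
        refine mul_le_mul_right (ENNReal.lintegral_mul_norm_pow_le (by fun_prop) (by fun_prop)
          hκ.le (by positivity) (sub_add_cancel _ _)) C
    _ ≤ C * ((2 ^ κ⁻¹ * ∫⁻ x, w x ^ κ⁻¹ ∂μ) ^ κ * (∫⁻ x, T x ^ ρ ∂μ) ^ ρ⁻¹) := by gcongr
    _ = _ := by
        rw [ENNReal.mul_rpow_of_nonneg _ _ hκ.le, ENNReal.rpow_inv_rpow hκ.ne']
        ring

/-- The Fefferman–Stein vector-valued maximal inequality. -/
theorem exists_lintegral_tsum_ballMaximal_le (μ : Measure E) [μ.IsAddHaarMeasure]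
    {r s : ℝ} (hr : 1 < r) (hs : 1 < s) :
    ∃ C : ℝ≥0∞, C ≠ ∞ ∧ ∀ F : ℕ → E → ℝ≥0∞, (∀ j, Measurable (F j)) →
      ∫⁻ x, (∑' j, ballMaximal μ (F j) x ^ s) ^ (r / s) ∂μ
        ≤ C * ∫⁻ x, (∑' j, F j x ^ s) ^ (r / s) ∂μ := by
  rcases lt_trichotomy r s with h | rfl | h
  · exact exists_lintegral_tsum_ballMaximal_le_of_lt μ hr h
  · simpa [div_self (by linarith : r ≠ 0)] using exists_lintegral_tsum_ballMaximal_le_of_eq μ hr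
  · exact exists_lintegral_tsum_ballMaximal_le_of_gt μ hs h

end Weights

section Cubes

variable {d : ℕ}

theorem cubeAt_subset_ball {c : Fin d → ℝ} {t : ℝ} (ht : 0 < t) {x : EuclideanSpace ℝ (Fin d)}
    (hx : x ∈ cubeAt d c t) : cubeAt d c t ⊆ ball x ((d + 1) * t) := by
  intro y hy
  rw [mem_ball, EuclideanSpace.dist_eq]
  refine lt_of_le_of_lt (Real.sqrt_le_sqrt (y := d * t ^ 2) ?_) ?_
  · calc ∑ i, dist (y i) (x i) ^ 2 ≤ ∑ _i : Fin d, t ^ 2 := by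
          refine Finset.sum_le_sum fun i _ => ?_
          gcongr
          rw [Real.dist_eq, abs_le]
          constructor <;> linarith [(hx i).1, (hx i).2, (hy i).1, (hy i).2]
      _ = d * t ^ 2 := by simp
  · rw [Real.sqrt_lt' (by positivity), mul_pow]
    gcongr
    have : (0 : ℝ) ≤ d := d.cast_nonneg
    nlinarith

theorem modMaximal_le_ballMaximal (τ : ℝ) (hτ : 0 < τ) (f : EuclideanSpace ℝ (Fin d) → ℝ)
    (x : EuclideanSpace ℝ (Fin d)) :
    modMaximal d τ f x ≤ (ENNReal.ofReal ((d + 1) ^ d) *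
      volume (ball (0 : EuclideanSpace ℝ (Fin d)) 1) *
      ballMaximal volume (fun y => ENNReal.ofReal (|f y| ^ τ)) x) ^ (1 / τ) := by
  refine iSup_le ?_
  rintro ⟨⟨c, t⟩, ht, hx⟩
  refine ENNReal.rpow_le_rpow ?_ (by positivity)
  simp only at ht hx ⊢
  have hR : 0 < (d + 1) * t := by positivity
  have hvol : volume (ball x ((d + 1) * t)) = ENNReal.ofReal (t ^ d) *
      (ENNReal.ofReal ((d + 1) ^ d) * volume (ball (0 : EuclideanSpace ℝ (Fin d)) 1)) := by
    rw [Measure.addHaar_ball_of_pos _ _ hR, finrank_euclideanSpace_fin, mul_pow, mul_comm (_ ^ d),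
      ENNReal.ofReal_mul (by positivity), mul_assoc]
  calc (ENNReal.ofReal (t ^ d))⁻¹ * ∫⁻ y in cubeAt d c t, ENNReal.ofReal (|f y| ^ τ)
      ≤ (ENNReal.ofReal (t ^ d))⁻¹ * ∫⁻ y in ball x ((d + 1) * t), ENNReal.ofReal (|f y| ^ τ) :=
        mul_le_mul_right (lintegral_mono_set (cubeAt_subset_ball ht hx)) _
    _ = ENNReal.ofReal ((d + 1) ^ d) * volume (ball (0 : EuclideanSpace ℝ (Fin d)) 1) *
          ⨍⁻ y in ball x ((d + 1) * t), ENNReal.ofReal (|f y| ^ τ) ∂volume := by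
        rw [← measure_mul_setLAverage _ measure_ball_lt_top.ne, hvol, mul_assoc,
          ENNReal.inv_mul_cancel_left (by simp; positivity) ENNReal.ofReal_ne_top]
    _ ≤ _ := mul_le_mul_right (setLAverage_le_ballMaximal _ _ (mem_ball_self hR)) _

end Cubes

/-- The vector-valued Fefferman–Stein inequality for the modified maximal operator `M_τ`:
for `0 < τ < p < ∞` and `τ < q < ∞`,
`‖(Σ_j |M_τ f_j|^q)^{1/q}‖_{L^p} ≤ K ‖(Σ_j |f_j|^q)^{1/q}‖_{L^p}`. -/
theorem fefferman_stein_modified (d : ℕ) (hd : 1 ≤ d) (τ p q : ℝ)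
    (hτ : 0 < τ) (hτp : τ < p) (hτq : τ < q) :
    ∃ K : ℝ≥0∞, K ≠ ∞ ∧ ∀ f : ℕ → EuclideanSpace ℝ (Fin d) → ℝ,
      (∀ j, Measurable (f j)) →
      (∫⁻ x, (∑' j, (modMaximal d τ (f j) x) ^ q) ^ (p / q)) ^ (1 / p)
        ≤ K * (∫⁻ x, (∑' j, ENNReal.ofReal (|f j x|) ^ q) ^ (p / q)) ^ (1 / p) := by
  have hp : 0 < p := hτ.trans hτp
  have hq : 0 < q := hτ.trans hτq
  obtain ⟨C, hC, vector⟩ := exists_lintegral_tsum_ballMaximal_le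
    (volume : Measure (EuclideanSpace ℝ (Fin d))) ((one_lt_div hτ).2 hτp) ((one_lt_div hτ).2 hτq)
  rw [div_div_div_cancel_right₀ hτ.ne'] at vector
  set κ : ℝ≥0∞ := ENNReal.ofReal ((d + 1) ^ d) *
    volume (ball (0 : EuclideanSpace ℝ (Fin d)) 1)
  have hκtop : κ ≠ ∞ := ENNReal.mul_ne_top ENNReal.ofReal_ne_top measure_ball_lt_top.ne
  refine ⟨((κ ^ (q / τ)) ^ (p / q) * C) ^ (1 / p), by finiteness, fun f hf => ?_⟩
  set F : ℕ → EuclideanSpace ℝ (Fin d) → ℝ≥0∞ := fun j y => ENNReal.ofReal (|f j y| ^ τ)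
  have hF : ∀ j, Measurable (F j) := fun j => by
    have := hf j
    fun_prop
  have hright : ∀ j x, ENNReal.ofReal |f j x| ^ q = F j x ^ (q / τ) := fun j x => by
    change _ = ENNReal.ofReal (|f j x| ^ τ) ^ (q / τ)
    rw [← ENNReal.ofReal_rpow_of_nonneg (abs_nonneg _) hτ.le, ← ENNReal.rpow_mul,
      mul_div_cancel₀ _ hτ.ne']
  have hleft : ∀ x, ∑' j, modMaximal d τ (f j) x ^ q
      ≤ κ ^ (q / τ) * ∑' j, ballMaximal volume (F j) x ^ (q / τ) := fun x => by
    rw [← ENNReal.tsum_mul_left]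
    refine ENNReal.tsum_le_tsum fun j => ?_
    rw [← ENNReal.mul_rpow_of_nonneg _ _ (by positivity), ← one_div_mul_eq_div, ENNReal.rpow_mul]
    exact ENNReal.rpow_le_rpow (modMaximal_le_ballMaximal τ hτ (f j) x) hq.le
  simp only [hright]
  rw [← ENNReal.mul_rpow_of_nonneg _ _ (by positivity), mul_assoc]
  refine ENNReal.rpow_le_rpow ?_ (by positivity)
  refine le_trans ?_ (mul_le_mul_right (vector F hF) _)
  rw [← lintegral_const_mul' _ _ (by finiteness)]
  refine lintegral_mono fun x => ?_
  rw [← ENNReal.mul_rpow_of_nonneg _ _ (by positivity)]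
  exact ENNReal.rpow_le_rpow (hleft x) (by positivity)
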